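/- Let d, p ≥ 1 and let (X, Y) be a random vector with X valued in ℝ^d and Y in ℝ^p, satisfying E‖X‖ < ∞, E‖Y‖ < ∞ and E[‖X‖·‖Y‖] < ∞. Define V²(X,Y) = ∫_{ℝ^d × ℝ^p} |φ_{X,Y}(t,s) − φ_X(t)·φ_Y(s)|² w_{d,p}(t,s) dt ds, and analogously V²(X,X) = ∫_{ℝ^d × ℝ^d} |φ_{X,X}(t,s) − φ_X(t)·φ_X(s)|² w_{d,d}(t,s) dt ds and V²(Y,Y) with weight w_{p,p}. If V²(X,X)·V²(Y,Y) > 0, then the distance correlation R²(X,Y) = V²(X,Y)/√(V²(X,X)·V²(Y,Y)) satisfies 0 ≤ R²(X,Y) ≤ 1; equivalently, V²(X,Y)² ≤ V²(X,X)·V²(Y,Y). -/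

import Mathlib

open MeasureTheory ProbabilityTheory Complex
open scoped RealInnerProductSpace ENNReal BigOperators

/-- The constant `c_l = π^{(1+l)/2} / Γ((1+l)/2)`. -/
noncomputable def cConst (l : ℕ) : ℝ :=
  Real.pi ^ ((1 + (l : ℝ)) / 2) / Real.Gamma ((1 + (l : ℝ)) / 2)

/-- The weight function `w_{a,b}(t,s) = (c_a c_b ‖t‖^{1+a} ‖s‖^{1+b})⁻¹`. -/
noncomputable def dCovWeight (a b : ℕ)
    (t : EuclideanSpace ℝ (Fin a)) (s : EuclideanSpace ℝ (Fin b)) : ℝ :=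
  (cConst a * cConst b * ‖t‖ ^ (1 + a) * ‖s‖ ^ (1 + b))⁻¹

/-- The squared distance covariance
`V²(X,Y) = ∫ |φ_{X,Y}(t,s) − φ_X(t) φ_Y(s)|² w_{a,b}(t,s) dt ds`, as an extended real. -/
noncomputable def distCov2 (a b : ℕ) {Ω : Type*} [MeasurableSpace Ω] (P : Measure Ω)
    (X : Ω → EuclideanSpace ℝ (Fin a)) (Y : Ω → EuclideanSpace ℝ (Fin b)) : ℝ≥0∞ :=
  ∫⁻ ts : EuclideanSpace ℝ (Fin a) × EuclideanSpace ℝ (Fin b),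
    ENNReal.ofReal
      (‖(∫ ω, Complex.exp (Complex.I * ((⟪ts.1, X ω⟫ + ⟪ts.2, Y ω⟫ : ℝ) : ℂ)) ∂P)
          - (∫ ω, Complex.exp (Complex.I * ((⟪ts.1, X ω⟫ : ℝ) : ℂ)) ∂P)
            * ∫ ω, Complex.exp (Complex.I * ((⟪ts.2, Y ω⟫ : ℝ) : ℂ)) ∂P‖ ^ 2
        * dCovWeight a b ts.1 ts.2)

/-!
With `f t = exp (i⟪t, X⟫) - φ_X(t)` and `g s = exp (i⟪s, Y⟫) - φ_Y(s)`, the difference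
`φ_{X,Y}(t, -s) - φ_X(t) φ_Y(-s)` is the inner product `⟨f t, g s⟩` in `L²(P)`. Since the weight is
a product `μ ⊗ ν` of symmetric measures, `V²(X,Y) = ∫∫ |⟨f t, g s⟩|² dμ(t) dν(s)`. Writing the
square as a double integral over independent copies `ω₁, ω₂` and exchanging the integrals, this is
the `L²(P ⊗ P)` inner product of the kernels `∫ f t ω₁ * conj (f t ω₂) dμ(t)` and
`∫ g s ω₁ * conj (g s ω₂) dν(s)`, whose squared norms are `V²(X,X)` and `V²(Y,Y)`; Cauchy–Schwarz
gives the inequality. As `μ` and `ν` are infinite, the exchange is made on sets of finite measure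
exhausting the space.

First moments make these quantities finite: the variance of `exp (i⟪t, X⟫)` is at most
`4 E|exp (i⟪t, X⟫) - 1|²`, and since `μ` is homogeneous of degree `-1` the `μ`-integral of
`|exp (i⟪t, x⟫) - 1|²` is at most `‖x‖ ∫ min(‖t‖, 2)² dμ(t)`, which is finite in polar
coordinates.
-/

open scoped ComplexConjugate

section Lebesgue

variable {α : Type*} [MeasurableSpace α] {μ : Measure α}

lemma sq_lintegral_mul_le {F G : α → ℝ≥0∞} (hF : AEMeasurable F μ) (hG : AEMeasurable G μ) :
    (∫⁻ x, F x * G x ∂μ) ^ 2 ≤ (∫⁻ x, F x ^ 2 ∂μ) * ∫⁻ x, G x ^ 2 ∂μ := by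
  have holder := ENNReal.lintegral_mul_le_Lp_mul_Lq μ Real.HolderConjugate.two_two hF hG
  simp only [Pi.mul_apply, ENNReal.rpow_two] at holder
  calc (∫⁻ x, F x * G x ∂μ) ^ 2
      ≤ ((∫⁻ x, F x ^ 2 ∂μ) ^ (1 / 2 : ℝ) * (∫⁻ x, G x ^ 2 ∂μ) ^ (1 / 2 : ℝ)) ^ 2 := by gcongr
    _ = (∫⁻ x, F x ^ 2 ∂μ) * ∫⁻ x, G x ^ 2 ∂μ := by
      simp only [mul_pow, ← ENNReal.rpow_mul_natCast]
      norm_num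

lemma enorm_integral_mul_conj {F : α → ℂ} (hF : MemLp F 2 μ) :
    ‖∫ x, F x * conj (F x) ∂μ‖ₑ = ∫⁻ x, ‖F x‖ₑ ^ 2 ∂μ := by
  have hFsq : Integrable (fun x => ‖F x‖ ^ 2) μ := hF.integrable_norm_pow two_ne_zero
  simp only [Complex.mul_conj, Complex.normSq_eq_norm_sq]
  rw [integral_complex_ofReal, ← ofReal_norm, Complex.norm_real,
    Real.norm_of_nonneg (by positivity), ofReal_integral_eq_lintegral_ofReal hFsq
      (.of_forall fun _ => by positivity)]
  simp only [← ofReal_norm, ENNReal.ofReal_pow (norm_nonneg _)]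

lemma lintegral_prod_eq_iSup_restrict_spanningSets {β : Type*} [MeasurableSpace β]
    {ν : Measure β} [SigmaFinite μ] [SigmaFinite ν] (F : α × β → ℝ≥0∞) :
    ∫⁻ q, F q ∂(μ.prod ν) = ⨆ n, ∫⁻ q, F q
      ∂((μ.restrict (spanningSets μ n)).prod (ν.restrict (spanningSets ν n))) := by
  have hmono : Monotone fun n => spanningSets μ n ×ˢ spanningSets ν n := fun _ _ h =>
    Set.prod_mono (monotone_spanningSets μ h) (monotone_spanningSets ν h)
  have hcover : ⋃ n, spanningSets μ n ×ˢ spanningSets ν n = Set.univ := by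
    rw [Set.iUnion_prod_of_monotone (monotone_spanningSets μ) (monotone_spanningSets ν),
      iUnion_spanningSets, iUnion_spanningSets, Set.univ_prod_univ]
  simp only [Measure.prod_restrict]
  rw [← setLIntegral_iUnion_of_directed F hmono.directed_le, hcover, Measure.restrict_univ]

lemma integral_sub_integral_mul_sub_integral [IsProbabilityMeasure μ] {A B : α → ℂ}
    (hA : Integrable A μ) (hB : Integrable B μ) (hAB : Integrable (fun x => A x * B x) μ) :
    ∫ x, (A x - ∫ y, A y ∂μ) * (B x - ∫ y, B y ∂μ) ∂μ
      = ∫ x, A x * B x ∂μ - (∫ x, A x ∂μ) * ∫ x, B x ∂μ := by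
  simp only [sub_mul, mul_sub]
  rw [integral_sub (by fun_prop) (by fun_prop), integral_sub (by fun_prop) (by fun_prop),
    integral_sub (by fun_prop) (by fun_prop), integral_mul_const, integral_const_mul]
  simp

lemma lintegral_enorm_sub_integral_sq_le [IsProbabilityMeasure μ] {A : α → ℂ}
    (hA : Integrable A μ) (c : ℂ) :
    ∫⁻ x, ‖A x - ∫ y, A y ∂μ‖ₑ ^ 2 ∂μ ≤ 4 * ∫⁻ x, ‖A x - c‖ₑ ^ 2 ∂μ := by
  set m := ∫ y, A y ∂μ
  have hdev : AEMeasurable (fun x => ‖A x - c‖ₑ) μ :=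
    (hA.aestronglyMeasurable.sub aestronglyMeasurable_const).enorm
  have jensen : ‖c - m‖ₑ ^ 2 ≤ ∫⁻ x, ‖A x - c‖ₑ ^ 2 ∂μ := by
    have hm : c - m = -∫ x, (A x - c) ∂μ := by
      rw [integral_sub hA (integrable_const c)]
      simp [m]
    calc ‖c - m‖ₑ ^ 2 ≤ (∫⁻ x, ‖A x - c‖ₑ * 1 ∂μ) ^ 2 := by
          rw [hm, enorm_neg]
          simp only [mul_one]
          gcongr
          exact enorm_integral_le_lintegral_enorm _
      _ ≤ ∫⁻ x, ‖A x - c‖ₑ ^ 2 ∂μ := by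
          simpa using sq_lintegral_mul_le hdev (aemeasurable_const (b := (1 : ℝ≥0∞)))
  calc ∫⁻ x, ‖A x - m‖ₑ ^ 2 ∂μ
      ≤ ∫⁻ x, 2 * (‖A x - c‖ₑ ^ 2 + ‖c - m‖ₑ ^ 2) ∂μ := by
        refine lintegral_mono fun x => ?_
        calc ‖A x - m‖ₑ ^ 2 ≤ (‖A x - c‖ₑ + ‖c - m‖ₑ) ^ 2 := by
              gcongr
              simpa using enorm_add_le (A x - c) (c - m)
          _ ≤ 2 * (‖A x - c‖ₑ ^ 2 + ‖c - m‖ₑ ^ 2) := by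
              simpa [show (2 : ℝ) - 1 = 1 by norm_num] using
                ENNReal.rpow_add_le_mul_rpow_add_rpow ‖A x - c‖ₑ ‖c - m‖ₑ one_le_two
    _ = 2 * (∫⁻ x, ‖A x - c‖ₑ ^ 2 ∂μ + ‖c - m‖ₑ ^ 2) := by
        rw [lintegral_const_mul' _ _ (by simp), lintegral_add_right _ measurable_const]
        simp
    _ ≤ 4 * ∫⁻ x, ‖A x - c‖ₑ ^ 2 ∂μ := by
        grw [jensen]
        rw [← two_mul, ← mul_assoc]
        norm_num

lemma integrableOn_Ioi_min_div_sq {m : ℝ} (hm : 0 ≤ m) :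
    IntegrableOn (fun y : ℝ => (min y m / y) ^ 2) (Set.Ioi 0) := by
  refine (integrable_inv_one_add_sq.const_mul (1 + m ^ 2)).integrableOn.mono'
    (Measurable.aestronglyMeasurable (by fun_prop)) ?_
  filter_upwards [ae_restrict_mem measurableSet_Ioi] with y (hy : 0 < y)
  rw [Real.norm_of_nonneg (by positivity), div_pow, ← div_eq_mul_inv,
    div_le_div_iff₀ (by positivity) (by positivity)]
  calc min y m ^ 2 * (1 + y ^ 2) = min y m ^ 2 + min y m ^ 2 * y ^ 2 := by ring
    _ ≤ y ^ 2 + m ^ 2 * y ^ 2 := by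
      gcongr
      · exact min_le_left y m
      · exact min_le_right y m
    _ = (1 + m ^ 2) * y ^ 2 := by ring

end Lebesgue

section CrossGram

lemma norm_mul_conj_le {u v : ℂ} {C D : ℝ} (hu : ‖u‖ ≤ C) (hv : ‖v‖ ≤ D) :
    ‖u * conj v‖ ≤ C * D := by
  rw [norm_mul, RCLike.norm_conj]
  exact mul_le_mul hu hv (norm_nonneg v) ((norm_nonneg u).trans hu)

variable {Ω T S : Type*} [MeasurableSpace Ω] {P : Measure Ω}
  {f : T → Ω → ℂ} {g : S → Ω → ℂ} {C D : ℝ}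

/-- The Gram kernel `(t, s) ↦ ⟨f t, g s⟩` of two families of functions, where `⟨u, v⟩` is the
`L²(P)` inner product `∫ u * conj v ∂P`, linear in its first argument. -/
noncomputable def crossGram (P : Measure Ω) (f : T → Ω → ℂ) (g : S → Ω → ℂ) (q : T × S) : ℂ :=
  ∫ ω, f q.1 ω * conj (g q.2 ω) ∂P

lemma norm_crossGram_le [IsFiniteMeasure P] (hfC : ∀ t ω, ‖f t ω‖ ≤ C)
    (hgD : ∀ s ω, ‖g s ω‖ ≤ D) (q : T × S) : ‖crossGram P f g q‖ ≤ C * D * P.real Set.univ :=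
  norm_integral_le_of_norm_le_const <| .of_forall fun _ => norm_mul_conj_le (hfC _ _) (hgD _ _)

lemma enorm_crossGram_sq_le (q : T × S) (hf : AEMeasurable (f q.1) P)
    (hg : AEMeasurable (g q.2) P) :
    ‖crossGram P f g q‖ₑ ^ 2 ≤ (∫⁻ ω, ‖f q.1 ω‖ₑ ^ 2 ∂P) * ∫⁻ ω, ‖g q.2 ω‖ₑ ^ 2 ∂P :=
  calc ‖crossGram P f g q‖ₑ ^ 2 ≤ (∫⁻ ω, ‖f q.1 ω‖ₑ * ‖g q.2 ω‖ₑ ∂P) ^ 2 := by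
        gcongr
        refine (enorm_integral_le_lintegral_enorm _).trans_eq ?_
        simp only [enorm_mul, RCLike.enorm_conj]
    _ ≤ _ := sq_lintegral_mul_le hf.enorm hg.enorm

variable [MeasurableSpace T] [MeasurableSpace S] {μ : Measure T} {ν : Measure S}

lemma measurable_uncurry_mul_conj (hf : Measurable (Function.uncurry f))
    (hg : Measurable (Function.uncurry g)) :
    Measurable (Function.uncurry fun (q : T × S) ω => f q.1 ω * conj (g q.2 ω)) :=
  (hf.comp (measurable_fst.fst.prodMk measurable_snd)).mul
    (Complex.continuous_conj.measurable.comp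
      (hg.comp (measurable_fst.snd.prodMk measurable_snd)))

lemma measurable_crossGram [SFinite P] (hf : Measurable (Function.uncurry f))
    (hg : Measurable (Function.uncurry g)) : Measurable (crossGram P f g) :=
  (StronglyMeasurable.integral_prod_right'
    (measurable_uncurry_mul_conj hf hg).stronglyMeasurable).measurable

lemma memLp_crossGram [IsFiniteMeasure P] {ρ : Measure (T × S)} [IsFiniteMeasure ρ]
    (hf : Measurable (Function.uncurry f)) (hg : Measurable (Function.uncurry g))
    (hfC : ∀ t ω, ‖f t ω‖ ≤ C) (hgD : ∀ s ω, ‖g s ω‖ ≤ D) (r : ℝ≥0∞) :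
    MemLp (crossGram P f g) r ρ :=
  .of_bound (measurable_crossGram hf hg).aestronglyMeasurable _
    (.of_forall (norm_crossGram_le hfC hgD))

lemma integral_crossGram_mul_conj [IsFiniteMeasure P] [IsFiniteMeasure μ] [IsFiniteMeasure ν]
    (hf : Measurable (Function.uncurry f)) (hg : Measurable (Function.uncurry g))
    (hfC : ∀ t ω, ‖f t ω‖ ≤ C) (hgD : ∀ s ω, ‖g s ω‖ ≤ D) :
    ∫ q, crossGram P f g q * conj (crossGram P f g q) ∂(μ.prod ν)
      = ∫ z, crossGram μ (flip f) (flip f) z * conj (crossGram ν (flip g) (flip g) z)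
          ∂(P.prod P) := by
  let h (q : T × S) (ω : Ω) : ℂ := f q.1 ω * conj (g q.2 ω)
  have hbound (q : T × S) (ω : Ω) : ‖h q ω‖ ≤ C * D :=
    norm_mul_conj_le (hfC _ _) (hgD _ _)
  have hmeas : Measurable (Function.uncurry h) := measurable_uncurry_mul_conj hf hg
  have hleft (q : T × S) : crossGram P f g q * conj (crossGram P f g q)
      = ∫ z, h q z.1 * conj (h q z.2) ∂(P.prod P) := by
    rw [integral_prod_mul (h q) fun ω => conj (h q ω), integral_conj]
    rfl
  have hright (z : Ω × Ω) :
      crossGram μ (flip f) (flip f) z * conj (crossGram ν (flip g) (flip g) z)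
        = ∫ q, h q z.1 * conj (h q z.2) ∂(μ.prod ν) := by
    unfold crossGram
    rw [← integral_conj, ← integral_prod_mul]
    congr with q
    simp only [h, flip, map_mul, Complex.conj_conj]
    ring
  simp only [hleft, hright]
  refine integral_integral_swap (.of_bound (C := C * D * (C * D)) ?_ (.of_forall fun _ => ?_))
  · exact ((hmeas.comp (measurable_fst.prodMk measurable_snd.fst)).mul
      (Complex.continuous_conj.measurable.comp
        (hmeas.comp (measurable_fst.prodMk measurable_snd.snd)))).aestronglyMeasurable
  · exact norm_mul_conj_le (hbound _ _) (hbound _ _)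

lemma lintegral_enorm_crossGram_self_sq_eq_flip [IsFiniteMeasure P] [IsFiniteMeasure μ]
    (hf : Measurable (Function.uncurry f)) (hfC : ∀ t ω, ‖f t ω‖ ≤ C) :
    ∫⁻ q, ‖crossGram P f f q‖ₑ ^ 2 ∂(μ.prod μ)
      = ∫⁻ z, ‖crossGram μ (flip f) (flip f) z‖ₑ ^ 2 ∂(P.prod P) := by
  have hflip : Measurable (Function.uncurry (flip f)) := hf.comp measurable_swap
  have hflipC : ∀ ω t, ‖flip f ω t‖ ≤ C := fun ω t => hfC t ω
  rw [← enorm_integral_mul_conj (memLp_crossGram hf hf hfC hfC 2),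
    ← enorm_integral_mul_conj (memLp_crossGram hflip hflip hflipC hflipC 2),
    integral_crossGram_mul_conj hf hf hfC hfC]

lemma sq_lintegral_enorm_crossGram_sq_le_of_isFiniteMeasure [IsFiniteMeasure P] [IsFiniteMeasure μ]
    [IsFiniteMeasure ν] (hf : Measurable (Function.uncurry f))
    (hg : Measurable (Function.uncurry g)) (hfC : ∀ t ω, ‖f t ω‖ ≤ C)
    (hgD : ∀ s ω, ‖g s ω‖ ≤ D) :
    (∫⁻ q, ‖crossGram P f g q‖ₑ ^ 2 ∂(μ.prod ν)) ^ 2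
      ≤ (∫⁻ q, ‖crossGram P f f q‖ₑ ^ 2 ∂(μ.prod μ))
        * ∫⁻ q, ‖crossGram P g g q‖ₑ ^ 2 ∂(ν.prod ν) := by
  have hKf : Measurable (crossGram μ (flip f) (flip f)) :=
    measurable_crossGram (hf.comp measurable_swap) (hf.comp measurable_swap)
  have hKg : Measurable (crossGram ν (flip g) (flip g)) :=
    measurable_crossGram (hg.comp measurable_swap) (hg.comp measurable_swap)
  rw [lintegral_enorm_crossGram_self_sq_eq_flip hf hfC,
    lintegral_enorm_crossGram_self_sq_eq_flip hg hgD,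
    ← enorm_integral_mul_conj (memLp_crossGram hf hg hfC hgD 2),
    integral_crossGram_mul_conj hf hg hfC hgD]
  refine le_trans ?_ (sq_lintegral_mul_le hKf.enorm.aemeasurable hKg.enorm.aemeasurable)
  gcongr
  refine (enorm_integral_le_lintegral_enorm _).trans_eq ?_
  simp only [enorm_mul, RCLike.enorm_conj]

lemma sq_lintegral_enorm_crossGram_sq_le [IsFiniteMeasure P] [SigmaFinite μ] [SigmaFinite ν]
    (hf : Measurable (Function.uncurry f)) (hg : Measurable (Function.uncurry g))
    (hfC : ∀ t ω, ‖f t ω‖ ≤ C) (hgD : ∀ s ω, ‖g s ω‖ ≤ D) :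
    (∫⁻ q, ‖crossGram P f g q‖ₑ ^ 2 ∂(μ.prod ν)) ^ 2
      ≤ (∫⁻ q, ‖crossGram P f f q‖ₑ ^ 2 ∂(μ.prod μ))
        * ∫⁻ q, ‖crossGram P g g q‖ₑ ^ 2 ∂(ν.prod ν) := by
  rw [lintegral_prod_eq_iSup_restrict_spanningSets, ENNReal.iSup_pow]
  refine iSup_le fun n => ?_
  have : IsFiniteMeasure (μ.restrict (spanningSets μ n)) :=
    isFiniteMeasure_restrict.2 (measure_spanningSets_lt_top μ n).ne
  have : IsFiniteMeasure (ν.restrict (spanningSets ν n)) :=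
    isFiniteMeasure_restrict.2 (measure_spanningSets_lt_top ν n).ne
  refine (sq_lintegral_enorm_crossGram_sq_le_of_isFiniteMeasure hf hg hfC hgD).trans ?_
  simp only [Measure.prod_restrict]
  gcongr <;> exact Measure.restrict_le_self

lemma lintegral_enorm_crossGram_sq_le [SFinite P] [SFinite ν]
    (hf : Measurable (Function.uncurry f)) (hg : Measurable (Function.uncurry g)) :
    ∫⁻ q, ‖crossGram P f g q‖ₑ ^ 2 ∂(μ.prod ν)
      ≤ (∫⁻ t, ∫⁻ ω, ‖f t ω‖ₑ ^ 2 ∂P ∂μ) * ∫⁻ s, ∫⁻ ω, ‖g s ω‖ₑ ^ 2 ∂P ∂ν := by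
  refine (lintegral_mono fun q => enorm_crossGram_sq_le q hf.of_uncurry_left.aemeasurable
    hg.of_uncurry_left.aemeasurable).trans_eq ?_
  exact lintegral_prod_mul (hf.enorm.pow_const 2).lintegral_prod_right'.aemeasurable
    (hg.enorm.pow_const 2).lintegral_prod_right'.aemeasurable

end CrossGram

section CenteredCharacter

variable {Ω E F : Type*} [MeasurableSpace Ω] {P : Measure Ω}
  [NormedAddCommGroup E] [InnerProductSpace ℝ E] [MeasurableSpace E]
  [NormedAddCommGroup F] [InnerProductSpace ℝ F] [MeasurableSpace F] {X : Ω → E} {Y : Ω → F}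

/-- The centred random character `exp (i⟪t, X⟫) - φ_X(t)`, where `φ_X` is the characteristic
function of `X`. -/
noncomputable def centeredCharacter (P : Measure Ω) (X : Ω → E) (t : E) (ω : Ω) : ℂ :=
  exp (I * (⟪t, X ω⟫ : ℝ)) - charFun (P.map X) t

lemma conj_centeredCharacter_neg (t : E) (ω : Ω) :
    conj (centeredCharacter P X (-t) ω) = centeredCharacter P X t ω := by
  simp [centeredCharacter, charFun_neg, ← exp_conj]

lemma charFun_map_eq_integral [OpensMeasurableSpace E] (hX : AEMeasurable X P) (t : E) :
    charFun (P.map X) t = ∫ ω, exp (I * (⟪t, X ω⟫ : ℝ)) ∂P := by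
  rw [charFun_apply, integral_map hX (by fun_prop)]
  simp only [real_inner_comm, mul_comm]

lemma integrable_exp_I_mul_ofReal [IsFiniteMeasure P] {r : Ω → ℝ} (hr : AEMeasurable r P) :
    Integrable (fun ω => exp (I * (r ω : ℂ))) P :=
  .of_bound (C := 1) (by fun_prop) (.of_forall fun ω => (norm_exp_I_mul_ofReal (r ω)).le)

variable [IsProbabilityMeasure P]

lemma norm_centeredCharacter_le (hX : AEMeasurable X P) (t : E) (ω : Ω) :
    ‖centeredCharacter P X t ω‖ ≤ 2 := by
  have := Measure.isProbabilityMeasure_map hX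
  calc ‖centeredCharacter P X t ω‖ ≤ ‖exp (I * (⟪t, X ω⟫ : ℝ))‖ + ‖charFun (P.map X) t‖ :=
        norm_sub_le _ _
    _ ≤ 1 + 1 := add_le_add (norm_exp_I_mul_ofReal _).le (norm_charFun_le_one t)
    _ = 2 := one_add_one_eq_two

variable [BorelSpace E] [SecondCountableTopology E]

lemma measurable_centeredCharacter (hX : Measurable X) :
    Measurable (Function.uncurry (centeredCharacter P X)) := by
  unfold centeredCharacter Function.uncurry
  fun_prop

lemma lintegral_enorm_centeredCharacter_sq_le (hX : AEMeasurable X P) (t : E) :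
    ∫⁻ ω, ‖centeredCharacter P X t ω‖ₑ ^ 2 ∂P
      ≤ 4 * ∫⁻ ω, ‖exp (I * (⟪t, X ω⟫ : ℝ)) - 1‖ₑ ^ 2 ∂P := by
  simp only [centeredCharacter, charFun_map_eq_integral hX]
  exact lintegral_enorm_sub_integral_sq_le (integrable_exp_I_mul_ofReal (by fun_prop)) 1

variable [BorelSpace F] [SecondCountableTopology F]

lemma crossGram_centeredCharacter_neg (hX : AEMeasurable X P) (hY : AEMeasurable Y P)
    (t : E) (s : F) :
    crossGram P (centeredCharacter P X) (centeredCharacter P Y) (t, -s)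
      = (∫ ω, exp (I * ((⟪t, X ω⟫ + ⟪s, Y ω⟫ : ℝ) : ℂ)) ∂P)
        - (∫ ω, exp (I * (⟪t, X ω⟫ : ℝ)) ∂P) * ∫ ω, exp (I * (⟪s, Y ω⟫ : ℝ)) ∂P := by
  have hmul (ω : Ω) : exp (I * ((⟪t, X ω⟫ + ⟪s, Y ω⟫ : ℝ) : ℂ))
      = exp (I * (⟪t, X ω⟫ : ℝ)) * exp (I * (⟪s, Y ω⟫ : ℝ)) := by
    rw [ofReal_add, mul_add, exp_add]
  have hXt : AEMeasurable (fun ω => ⟪t, X ω⟫) P := by fun_prop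
  have hYs : AEMeasurable (fun ω => ⟪s, Y ω⟫) P := by fun_prop
  have hprod := integrable_exp_I_mul_ofReal (hXt.add hYs)
  simp only [Pi.add_apply, hmul] at hprod
  simp only [crossGram, conj_centeredCharacter_neg, hmul]
  rw [← integral_sub_integral_mul_sub_integral (integrable_exp_I_mul_ofReal hXt)
    (integrable_exp_I_mul_ofReal hYs) hprod]
  simp only [centeredCharacter, charFun_map_eq_integral hX, charFun_map_eq_integral hY]

end CenteredCharacter

section DistCovMeasure

variable {a : ℕ}

lemma cConst_nonneg (l : ℕ) : 0 ≤ cConst l :=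
  div_nonneg (by positivity) (Real.Gamma_nonneg_of_nonneg (by positivity))

/-- The one-variable factor `dt / (c_a ‖t‖^{1+a})` of the weight `w_{a,b}(t,s) dt ds`, as a
measure on `ℝ^a`. -/
noncomputable def distCovMeasure (a : ℕ) : Measure (EuclideanSpace ℝ (Fin a)) :=
  volume.withDensity fun t => ENNReal.ofReal (cConst a * ‖t‖ ^ (1 + a))⁻¹

instance (a : ℕ) : SigmaFinite (distCovMeasure a) := SigmaFinite.withDensity_ofReal _

lemma lintegral_distCovMeasure {G : EuclideanSpace ℝ (Fin a) → ℝ≥0∞} (hG : Measurable G) :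
    ∫⁻ t, G t ∂(distCovMeasure a)
      = ∫⁻ t, ENNReal.ofReal (cConst a * ‖t‖ ^ (1 + a))⁻¹ * G t :=
  lintegral_withDensity_eq_lintegral_mul _ (by fun_prop) hG

lemma lintegral_comp_smul_distCovMeasure {G : EuclideanSpace ℝ (Fin a) → ℝ≥0∞}
    (hG : Measurable G) {r : ℝ} (hr : r ≠ 0) :
    ∫⁻ t, G (r • t) ∂(distCovMeasure a) = ‖r‖ₑ * ∫⁻ t, G t ∂(distCovMeasure a) := by
  let H (t : EuclideanSpace ℝ (Fin a)) : ℝ≥0∞ :=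
    ENNReal.ofReal (cConst a * ‖t‖ ^ (1 + a))⁻¹ * G t
  have hH : Measurable H := by fun_prop
  have homogeneous (t : EuclideanSpace ℝ (Fin a)) :
      ENNReal.ofReal (cConst a * ‖t‖ ^ (1 + a))⁻¹ * G (r • t) = ‖r‖ₑ ^ (1 + a) * H (r • t) := by
    rw [← ofReal_norm, ← ENNReal.ofReal_pow (norm_nonneg r), ← mul_assoc,
      ← ENNReal.ofReal_mul (by positivity), norm_smul, mul_pow, mul_left_comm,
      mul_inv (‖r‖ ^ (1 + a)), mul_inv_cancel_left₀ (pow_ne_zero _ (norm_ne_zero_iff.2 hr))]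
  have scaling : ∫⁻ t, H (r • t) = (‖r‖ₑ ^ a)⁻¹ * ∫⁻ t, H t := by
    rw [← lintegral_map hH (measurable_const_smul r), Measure.map_addHaar_smul _ hr,
      lintegral_smul_measure, finrank_euclideanSpace_fin, smul_eq_mul, ← Real.norm_eq_abs,
      ofReal_norm, enorm_inv (pow_ne_zero a hr), enorm_pow]
  rw [lintegral_distCovMeasure (by fun_prop), lintegral_distCovMeasure hG]
  simp only [homogeneous]
  rw [lintegral_const_mul _ (by fun_prop), scaling, ← mul_assoc, pow_add, pow_one, mul_assoc ‖r‖ₑ,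
    ENNReal.mul_inv_cancel (pow_ne_zero a (enorm_ne_zero.2 hr)) (by simp), mul_one]

instance (a : ℕ) : (distCovMeasure a).IsNegInvariant where
  neg_eq_self := by
    refine Measure.ext_of_lintegral _ fun G hG => ?_
    rw [Measure.neg, lintegral_map hG measurable_neg]
    simpa using lintegral_comp_smul_distCovMeasure hG (neg_ne_zero.2 one_ne_zero)

lemma lintegral_min_norm_sq_ne_top (ha : 1 ≤ a) {m : ℝ} (hm : 0 ≤ m) :
    ∫⁻ t, ENNReal.ofReal (min ‖t‖ m) ^ 2 ∂(distCovMeasure a) ≠ ⊤ := by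
  have : NeZero a := ⟨by lia⟩
  have radial : IntegrableOn
      (fun y : ℝ => y ^ (a - 1) • ((cConst a * y ^ (1 + a))⁻¹ * min y m ^ 2)) (Set.Ioi 0) := by
    refine IntegrableOn.congr_fun
      (Integrable.const_mul (integrableOn_Ioi_min_div_sq hm) (cConst a)⁻¹)
      (fun y (hy : 0 < y) => ?_) measurableSet_Ioi
    have hpow : y ^ (1 + a) = y ^ (a - 1) * y ^ 2 := by
      rw [← pow_add]
      congr 1
      lia
    simp only [smul_eq_mul, hpow, mul_inv]
    field_simp
  have hint := (integrable_fun_norm_addHaar (volume : Measure (EuclideanSpace ℝ (Fin a)))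
    (f := fun y => (cConst a * y ^ (1 + a))⁻¹ * min y m ^ 2)).2 (by simpa using radial)
  have hc := cConst_nonneg a
  rw [lintegral_distCovMeasure (by fun_prop)]
  convert hint.lintegral_lt_top.ne with t
  rw [ENNReal.ofReal_mul (by positivity), ENNReal.ofReal_pow (by positivity)]

lemma lintegral_enorm_exp_I_mul_inner_sub_one_sq_le (x : EuclideanSpace ℝ (Fin a)) :
    ∫⁻ t, ‖exp (I * (⟪t, x⟫ : ℝ)) - 1‖ₑ ^ 2 ∂(distCovMeasure a)
      ≤ ‖x‖ₑ * ∫⁻ t, ENNReal.ofReal (min ‖t‖ 2) ^ 2 ∂(distCovMeasure a) := by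
  rcases eq_or_ne x 0 with rfl | hx
  · simp
  rw [← enorm_norm x, ← lintegral_comp_smul_distCovMeasure (by fun_prop) (norm_ne_zero_iff.2 hx)]
  refine lintegral_mono fun t => ?_
  rw [← ofReal_norm]
  gcongr
  refine le_min ?_ ?_
  · refine Real.norm_exp_I_mul_ofReal_sub_one_le.trans ?_
    rw [norm_smul, norm_norm, mul_comm]
    exact norm_inner_le_norm t x
  · refine (norm_sub_le _ _).trans_eq ?_
    rw [norm_exp_I_mul_ofReal, norm_one, one_add_one_eq_two]

end DistCovMeasure

section DistCov

variable {a b : ℕ} {Ω : Type*} [MeasurableSpace Ω] {P : Measure Ω} [IsProbabilityMeasure P]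
  {X : Ω → EuclideanSpace ℝ (Fin a)} {Y : Ω → EuclideanSpace ℝ (Fin b)}

lemma distCov2_eq_lintegral_enorm_crossGram_sq (hX : Measurable X) (hY : Measurable Y) :
    distCov2 a b P X Y
      = ∫⁻ q, ‖crossGram P (centeredCharacter P X) (centeredCharacter P Y) q‖ₑ ^ 2
          ∂((distCovMeasure a).prod (distCovMeasure b)) := by
  have hgram : Measurable (crossGram P (centeredCharacter P X) (centeredCharacter P Y)) :=
    measurable_crossGram (measurable_centeredCharacter hX) (measurable_centeredCharacter hY)
  have hneg := (MeasurePreserving.id (distCovMeasure a)).prod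
    (Measure.measurePreserving_neg (distCovMeasure b))
  have hcomp : Measurable fun q => ‖crossGram P (centeredCharacter P X) (centeredCharacter P Y)
      (Prod.map id Neg.neg q)‖ₑ ^ 2 := (hgram.comp hneg.measurable).enorm.pow_const 2
  rw [← hneg.lintegral_comp (hgram.enorm.pow_const 2), distCovMeasure, distCovMeasure,
    prod_withDensity (by fun_prop) (by fun_prop), lintegral_withDensity_eq_lintegral_mul _
      (by fun_prop) hcomp]
  refine lintegral_congr fun ts => ?_
  have hw : dCovWeight a b ts.1 ts.2
      = (cConst a * ‖ts.1‖ ^ (1 + a))⁻¹ * (cConst b * ‖ts.2‖ ^ (1 + b))⁻¹ := by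
    rw [dCovWeight, ← mul_inv]
    ring_nf
  have ha := cConst_nonneg a
  rw [Pi.mul_apply, hw, ENNReal.ofReal_mul (by positivity), ENNReal.ofReal_mul (by positivity),
    mul_comm, ENNReal.ofReal_pow (norm_nonneg _), ofReal_norm,
    ← crossGram_centeredCharacter_neg hX.aemeasurable hY.aemeasurable]
  rfl

theorem distCov2_sq_le (hX : Measurable X) (hY : Measurable Y) :
    distCov2 a b P X Y ^ 2 ≤ distCov2 a a P X X * distCov2 b b P Y Y := by
  simp only [distCov2_eq_lintegral_enorm_crossGram_sq, hX, hY]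
  exact sq_lintegral_enorm_crossGram_sq_le (measurable_centeredCharacter hX)
    (measurable_centeredCharacter hY) (norm_centeredCharacter_le hX.aemeasurable)
    (norm_centeredCharacter_le hY.aemeasurable)

lemma lintegral_lintegral_enorm_centeredCharacter_sq_ne_top (ha : 1 ≤ a) (hX : Measurable X)
    (hX1 : Integrable X P) :
    ∫⁻ t, ∫⁻ ω, ‖centeredCharacter P X t ω‖ₑ ^ 2 ∂P ∂(distCovMeasure a) ≠ ⊤ := by
  set C := ∫⁻ t, ENNReal.ofReal (min ‖t‖ 2) ^ 2 ∂(distCovMeasure a)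
  refine ne_top_of_le_ne_top ?_ <| calc
    ∫⁻ t, ∫⁻ ω, ‖centeredCharacter P X t ω‖ₑ ^ 2 ∂P ∂(distCovMeasure a)
      ≤ ∫⁻ t, 4 * ∫⁻ ω, ‖exp (I * (⟪t, X ω⟫ : ℝ)) - 1‖ₑ ^ 2 ∂P ∂(distCovMeasure a) :=
        lintegral_mono fun t => lintegral_enorm_centeredCharacter_sq_le hX.aemeasurable t
    _ = 4 * ∫⁻ ω, ∫⁻ t, ‖exp (I * (⟪t, X ω⟫ : ℝ)) - 1‖ₑ ^ 2 ∂(distCovMeasure a) ∂P := by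
        rw [lintegral_const_mul' _ _ (by simp), lintegral_lintegral_swap (by fun_prop)]
    _ ≤ 4 * ∫⁻ ω, ‖X ω‖ₑ * C ∂P := by
        gcongr with ω
        exact lintegral_enorm_exp_I_mul_inner_sub_one_sq_le (X ω)
    _ = 4 * ((∫⁻ ω, ‖X ω‖ₑ ∂P) * C) := by rw [lintegral_mul_const _ hX.enorm]
  exact ENNReal.mul_ne_top (by simp)
    (ENNReal.mul_ne_top hX1.hasFiniteIntegral.ne (lintegral_min_norm_sq_ne_top ha zero_le_two))

theorem distCov2_ne_top (ha : 1 ≤ a) (hb : 1 ≤ b) (hX : Measurable X) (hY : Measurable Y)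
    (hX1 : Integrable X P) (hY1 : Integrable Y P) : distCov2 a b P X Y ≠ ⊤ := by
  rw [distCov2_eq_lintegral_enorm_crossGram_sq hX hY]
  exact ne_top_of_le_ne_top
    (ENNReal.mul_ne_top (lintegral_lintegral_enorm_centeredCharacter_sq_ne_top ha hX hX1)
      (lintegral_lintegral_enorm_centeredCharacter_sq_ne_top hb hY hY1))
    (lintegral_enorm_crossGram_sq_le (measurable_centeredCharacter hX)
      (measurable_centeredCharacter hY))

end DistCov

theorem stmt_2_general
    (d p : ℕ) {Ω : Type*} [MeasurableSpace Ω] (P : Measure Ω) [IsProbabilityMeasure P]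
    (X : Ω → EuclideanSpace ℝ (Fin d)) (Y : Ω → EuclideanSpace ℝ (Fin p))
    (hX : Measurable X) (hY : Measurable Y)
    (hpos : 0 < distCov2 d d P X X * distCov2 p p P Y Y)
    (hfin : distCov2 d d P X X * distCov2 p p P Y Y ≠ ⊤) :
    (distCov2 d p P X Y) ^ 2 ≤ distCov2 d d P X X * distCov2 p p P Y Y
    ∧ 0 ≤ (distCov2 d p P X Y).toReal
        / Real.sqrt ((distCov2 d d P X X).toReal * (distCov2 p p P Y Y).toReal)
    ∧ (distCov2 d p P X Y).toReal
        / Real.sqrt ((distCov2 d d P X X).toReal * (distCov2 p p P Y Y).toReal) ≤ 1 := by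
  have hsq := distCov2_sq_le (P := P) hX hY
  refine ⟨hsq, by positivity, ?_⟩
  rw [← ENNReal.toReal_mul, div_le_one (Real.sqrt_pos.2 (ENNReal.toReal_pos hpos.ne' hfin))]
  apply Real.le_sqrt_of_sq_le
  rw [← ENNReal.toReal_pow]
  exact ENNReal.toReal_mono hfin hsq

theorem stmt_2
    (d p : ℕ) (hd : 1 ≤ d) (hp : 1 ≤ p)
    {Ω : Type*} [MeasurableSpace Ω] (P : Measure Ω) [IsProbabilityMeasure P]
    (X : Ω → EuclideanSpace ℝ (Fin d)) (Y : Ω → EuclideanSpace ℝ (Fin p))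
    (hX : Measurable X) (hY : Measurable Y)
    (hX1 : Integrable (fun ω => ‖X ω‖) P)
    (hY1 : Integrable (fun ω => ‖Y ω‖) P)
    (hXY1 : Integrable (fun ω => ‖X ω‖ * ‖Y ω‖) P)
    (hpos : 0 < distCov2 d d P X X * distCov2 p p P Y Y) :
    (distCov2 d p P X Y) ^ 2 ≤ distCov2 d d P X X * distCov2 p p P Y Y
    ∧ 0 ≤ (distCov2 d p P X Y).toReal
        / Real.sqrt ((distCov2 d d P X X).toReal * (distCov2 p p P Y Y).toReal)
    ∧ (distCov2 d p P X Y).toReal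
        / Real.sqrt ((distCov2 d d P X X).toReal * (distCov2 p p P Y Y).toReal) ≤ 1 := by
  have hXint : Integrable X P := (integrable_norm_iff hX.aestronglyMeasurable).1 hX1
  have hYint : Integrable Y P := (integrable_norm_iff hY.aestronglyMeasurable).1 hY1
  exact stmt_2_general d p P X Y hX hY hpos <|
    ENNReal.mul_ne_top (distCov2_ne_top hd hd hX hX hXint hXint)
      (distCov2_ne_top hp hp hY hY hYint hYint)
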